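/- arXiv:2005.03791 — 5 statements merged into one kernel-verified Lean document; each statement's English description precedes it below -/
import Mathlib

section
/- Let m ≥ 1 be an integer and let F be a finite simple graph that is a forest (contains no cycles) in which every vertex has degree at most m+1. Then the largest eigenvalue of the adjacency matrix of F is at most 2√m. -/
/-!
Choose a root in every component of the forest and let `d v` be the distance from `v` to the root
of its component. Adjacent vertices differ by exactly one in `d`, and, paths being unique, `v` has
at most one neighbour closer to the root (its parent). For the positive weight `w v = (√m)⁻¹ ^ d v`
a parent of `v` has weight `√m * w v` and any other neighbour has weight `w v / √m`, so, as
`1 / √m ≤ √m`, the neighbours of `v` have total weight at most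
`(√m + m / √m) * w v = 2 * √m * w v`.

A positive `w` with `A w ≤ c w` bounds all eigenvalues by `c` (the Collatz–Wielandt bound): compare
an eigenvector `x` with `w` at a vertex where `|x v| / w v` is maximal.
-/

/-- The largest eigenvalue of (the adjacency matrix of) a finite simple graph,
as the supremum of the spectrum of its real adjacency matrix. -/
noncomputable def graphLamMax {V : Type*} [Fintype V] [DecidableEq V]
    (G : SimpleGraph V) : ℝ :=
  letI := Classical.decRel G.Adj
  sSup (spectrum ℝ (SimpleGraph.adjMatrix ℝ G))

open Finset in
/-- Collatz–Wielandt bound: a positive weight which the adjacency matrix expands by a factor of at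
most `c` at each vertex bounds every eigenvalue by `c`. -/
lemma eigenvalue_le_of_pos_weight {V : Type*} [Fintype V] [DecidableEq V]
    (G : SimpleGraph V) [DecidableRel G.Adj] (w : V → ℝ) (hw : ∀ v, 0 < w v) (c : ℝ)
    (hc : ∀ v, ∑ u ∈ G.neighborFinset v, w u ≤ c * w v)
    (μ : ℝ) (hμ : μ ∈ spectrum ℝ (G.adjMatrix ℝ)) : μ ≤ c := by
  rw [← Matrix.spectrum_toLin', ← Module.End.hasEigenvalue_iff_mem_spectrum] at hμ
  obtain ⟨x, hx⟩ := hμ.exists_hasEigenvector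
  have hx0 := hx.2
  have hxe : ∀ v, ∑ u ∈ G.neighborFinset v, x u = μ * x v := fun v ↦ by
    have h := congrFun hx.apply_eq_smul v
    rwa [Matrix.toLin'_apply, SimpleGraph.adjMatrix_mulVec_apply, Pi.smul_apply, smul_eq_mul] at h
  obtain ⟨a, ha⟩ := Function.ne_iff.mp hx0
  obtain ⟨v, -, hv⟩ := exists_max_image univ (fun v ↦ |x v| / w v) ⟨a, mem_univ a⟩
  set t := |x v| / w v with ht
  have hle : ∀ u, |x u| ≤ t * w u := fun u ↦ (div_le_iff₀ (hw u)).mp (hv u (mem_univ u))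
  have htpos : 0 < t := (div_pos (abs_pos.mpr ha) (hw a)).trans_le (hv a (mem_univ a))
  have hxv : |x v| = t * w v := by rw [ht, div_mul_cancel₀ _ (hw v).ne']
  have key : |μ| * (t * w v) ≤ c * (t * w v) := calc
    |μ| * (t * w v) = |∑ u ∈ G.neighborFinset v, x u| := by rw [hxe, abs_mul, hxv]
    _ ≤ ∑ u ∈ G.neighborFinset v, |x u| := abs_sum_le_sum_abs _ _
    _ ≤ ∑ u ∈ G.neighborFinset v, t * w u := sum_le_sum fun u _ ↦ hle u
    _ = t * ∑ u ∈ G.neighborFinset v, w u := by rw [mul_sum]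
    _ ≤ t * (c * w v) := mul_le_mul_of_nonneg_left (hc v) htpos.le
    _ = c * (t * w v) := by ring
  exact (le_abs_self μ).trans (le_of_mul_le_mul_right key (mul_pos htpos (hw v)))

/-- In a forest, a vertex has at most one neighbour closer to a given root. -/
lemma SimpleGraph.IsAcyclic.parent_unique {V : Type*} {G : SimpleGraph V} (hG : G.IsAcyclic)
    {r v u u' : V} (hr : G.Reachable r v) (hu : G.Adj v u) (hu' : G.Adj v u')
    (hd : G.dist r v = G.dist r u + 1) (hd' : G.dist r v = G.dist r u' + 1) : u = u' := by
  obtain ⟨p, hp, hpl⟩ := hr.exists_path_of_dist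
  -- Any such neighbour is the penultimate vertex of the path from the root.
  have key : ∀ y, G.Adj v y → G.dist r v = G.dist r y + 1 → y = p.penultimate := by
    intro y hy hdy
    obtain ⟨q, hq, hql⟩ := (hr.trans hy.reachable).exists_path_of_dist
    refine hG.eq_penultimate_of_adj_end hp hy
      (hG.mem_support_of_ne_mem_support_of_adj_of_isPath hp hq hy fun hv ↦ ?_)
    have h := congrArg SimpleGraph.Walk.length (hG.path_concat hp hq hy hv)
    rw [SimpleGraph.Walk.length_concat] at h
    omega
  rw [key u hu hd, key u' hu' hd']

/-- Every forest has a depth function: adjacent vertices differ by one in depth, and each vertex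
has at most one neighbour of smaller depth. -/
lemma SimpleGraph.IsAcyclic.exists_depth {V : Type*} {G : SimpleGraph V} (hG : G.IsAcyclic) :
    ∃ d : V → ℕ, (∀ v u, G.Adj v u → d v = d u + 1 ∨ d u = d v + 1) ∧
      ∀ v u u', G.Adj v u → G.Adj v u' → d v = d u + 1 → d v = d u' + 1 → u = u' := by
  let r : V → V := fun v ↦ (G.connectedComponentMk v).out
  have hr : ∀ v, G.Reachable (r v) v := fun v ↦
    SimpleGraph.ConnectedComponent.exact (Quot.out_eq (G.connectedComponentMk v))
  have hadj : ∀ v u, G.Adj v u → r u = r v := fun v u h ↦ by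
    simp only [r, SimpleGraph.ConnectedComponent.sound h.reachable]
  refine ⟨fun v ↦ G.dist (r v) v, fun v u h ↦ ?_, fun v u u' h h' hd hd' ↦ ?_⟩
  · simp only [hadj v u h]
    exact hG.dist_eq_dist_add_one_of_adj_of_reachable (r v) h (hr v)
  · simp only [hadj v u h] at hd
    simp only [hadj v u' h'] at hd'
    exact hG.parent_unique (hr v) h h' hd hd'

/-- if `F` is a finite simple forest (no cycles) in which every vertex has
degree at most `m + 1` for some integer `m ≥ 1`, then the largest eigenvalue of the
adjacency matrix of `F` is at most `2√m`. -/
theorem forest_lamMax_le {V : Type*} [Fintype V] [DecidableEq V]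
    (m : ℕ) (hm : 1 ≤ m) (F : SimpleGraph V) (hF : F.IsAcyclic)
    (hdeg : ∀ v : V, (F.neighborSet v).ncard ≤ m + 1) :
    graphLamMax F ≤ 2 * Real.sqrt m := by
  classical
  obtain ⟨d, hd, hpar⟩ := hF.exists_depth
  set s := Real.sqrt m with hs
  have hm' : (1 : ℝ) ≤ m := by exact_mod_cast hm
  have hs1 : 1 ≤ s := Real.one_le_sqrt.mpr hm'
  have hs0 : 0 < s := by linarith
  have hss : s * s = m := Real.mul_self_sqrt (by linarith)
  have hinv : s⁻¹ ≤ s := (inv_le_one_of_one_le₀ hs1).trans hs1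
  unfold graphLamMax
  refine Real.sSup_le (fun μ hμ ↦ ?_) (by positivity)
  refine @eigenvalue_le_of_pos_weight V _ _ F (Classical.decRel F.Adj) (fun v ↦ s⁻¹ ^ d v)
    (fun v ↦ by positivity) _ (fun v ↦ ?_) μ hμ
  set N := @SimpleGraph.neighborFinset V F v _ with hN
  have hmem : ∀ u, u ∈ N → F.Adj v u := fun u hu ↦ by simpa [hN] using hu
  have hcard : N.card ≤ m + 1 := by
    have h := hdeg v
    rwa [Set.ncard_eq_toFinset_card'] at h
  have hone : (N.filter fun u ↦ d v = d u + 1).card ≤ 1 := by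
    refine Finset.card_le_one.mpr fun a ha b hb ↦ ?_
    rw [Finset.mem_filter] at ha hb
    exact hpar v a b (hmem a ha.1) (hmem b hb.1) ha.2 hb.2
  have hterm : ∀ u ∈ N, s⁻¹ ^ d u =
      (s⁻¹ + if d v = d u + 1 then s - s⁻¹ else 0) * s⁻¹ ^ d v := by
    intro u hu
    split_ifs with h
    · rw [h, pow_succ]
      field_simp
      ring
    · rw [(hd v u (hmem u hu)).resolve_left h, pow_succ]
      ring
  rw [Finset.sum_congr rfl hterm, ← Finset.sum_mul]
  refine mul_le_mul_of_nonneg_right ?_ (by positivity)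
  rw [Finset.sum_add_distrib, ← Finset.sum_filter, Finset.sum_const, Finset.sum_const,
    nsmul_eq_mul, nsmul_eq_mul]
  have hcard' : (N.card : ℝ) ≤ m + 1 := by exact_mod_cast hcard
  have hone' : ((N.filter fun u ↦ d v = d u + 1).card : ℝ) ≤ 1 := by exact_mod_cast hone
  have h1 := mul_le_mul_of_nonneg_right hcard' (inv_pos.mpr hs0).le
  have h2 := mul_le_mul_of_nonneg_right hone' (sub_nonneg.mpr hinv)
  have h3 : (m : ℝ) * s⁻¹ = s := by rw [← hss, mul_assoc, mul_inv_cancel₀ hs0.ne', mul_one]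
  linarith
end

section
/- Let G be a finite simple graph, let S be a nonempty subset of its vertices, and let m ≥ 1 be an integer. Suppose that the spanning subgraph of G whose edge set consists of all edges of G that do NOT have both endpoints in S is a forest in which every vertex has degree at most m+1. Then λ_max(G) ≤ λ_max(G[S]) + 2√m, where G[S] is the induced subgraph of G on S. -/
open Matrix in
/-- Rayleigh principle: `c` bounds the spectrum from above iff it bounds the quadratic form. -/
lemma spectrum_le_iff_form_le {V : Type*} [Fintype V] [DecidableEq V]
    {A : Matrix V V ℝ} (hA : A.IsHermitian) (c : ℝ) :
    (∀ μ ∈ spectrum ℝ A, μ ≤ c) ↔ ∀ x : V → ℝ, x ⬝ᵥ A *ᵥ x ≤ c * (x ⬝ᵥ x) := by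
  have hB : (algebraMap ℝ (Matrix V V ℝ) c - A).IsHermitian := by
    refine IsHermitian.sub ?_ hA
    rw [Matrix.algebraMap_eq_diagonal]
    exact Matrix.isHermitian_diagonal _
  have h1 : (∀ μ ∈ spectrum ℝ A, μ ≤ c) ↔ (algebraMap ℝ (Matrix V V ℝ) c - A).PosSemidef := by
    rw [posSemidef_iff_isHermitian_and_spectrum_nonneg, and_iff_right hB,
      ← spectrum.singleton_sub_eq]
    simp [Set.subset_def]
  have h2 : ∀ x : V → ℝ, x ⬝ᵥ (algebraMap ℝ (Matrix V V ℝ) c - A) *ᵥ x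
      = c * (x ⬝ᵥ x) - x ⬝ᵥ A *ᵥ x := by
    intro x
    rw [Algebra.algebraMap_eq_smul_one, sub_mulVec, dotProduct_sub, smul_mulVec, one_mulVec,
      dotProduct_smul, smul_eq_mul]
  rw [h1]
  constructor
  · intro h x
    have := h.dotProduct_mulVec_nonneg x
    rw [star_trivial, h2] at this
    linarith
  · intro h
    refine PosSemidef.of_dotProduct_mulVec_nonneg hB fun x => ?_
    rw [star_trivial, h2]
    linarith [h x]

open scoped Classical in
lemma form_le_graphLamMax {V : Type*} [Fintype V] [DecidableEq V]
    (G : SimpleGraph V) (x : V → ℝ) :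
    ∑ i, ∑ j, (if G.Adj i j then x i * x j else 0) ≤ graphLamMax G * ∑ i, x i ^ 2 := by
  have h := (spectrum_le_iff_form_le (SimpleGraph.isHermitian_adjMatrix ℝ G) (graphLamMax G)).1
    (fun μ hμ => le_csSup (Matrix.finite_real_spectrum).bddAbove (by convert hμ)) x
  rw [SimpleGraph.dotProduct_mulVec_adjMatrix] at h
  simpa [dotProduct, sq] using h

open scoped Classical in
/-- The lower bound `0 ≤ c` covers the empty vertex type, where `graphLamMax` is `sSup ∅ = 0`. -/
lemma graphLamMax_le {V : Type*} [Fintype V] [DecidableEq V]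
    (G : SimpleGraph V) {c : ℝ} (hc : 0 ≤ c)
    (h : ∀ x : V → ℝ, ∑ i, ∑ j, (if G.Adj i j then x i * x j else 0) ≤ c * ∑ i, x i ^ 2) :
    graphLamMax G ≤ c := by
  refine Real.sSup_le (fun μ hμ => ?_) hc
  refine (spectrum_le_iff_form_le (SimpleGraph.isHermitian_adjMatrix ℝ G) c).2
    (fun x => ?_) μ (by convert hμ)
  rw [SimpleGraph.dotProduct_mulVec_adjMatrix]
  simpa [dotProduct, sq] using h x

lemma graphLamMax_nonneg {V : Type*} [Fintype V] [DecidableEq V] [Nonempty V]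
    (G : SimpleGraph V) : 0 ≤ graphLamMax G := by
  classical
  obtain ⟨v⟩ := ‹Nonempty V›
  -- The quadratic form vanishes at a standard basis vector, the graph having no loops.
  have h := form_le_graphLamMax G (Pi.single v 1)
  have h0 : ∀ i j, (if G.Adj i j then (Pi.single v (1 : ℝ) : V → ℝ) i *
      (Pi.single v (1 : ℝ) : V → ℝ) j else 0) = 0 := by
    intro i j
    by_cases hi : i = v <;> by_cases hj : j = v <;> simp_all [Pi.single_apply]
  simp only [h0, Finset.sum_const_zero] at h
  simpa [Pi.single_apply] using h

/-- Each tree of a forest can be rooted: every edge joins some vertex to its parent `p`. The value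
of `p` at a root is irrelevant. -/
lemma exists_parent {V : Type*} {G : SimpleGraph V} (hG : G.IsAcyclic) :
    ∃ p : V → V, ∀ u v, G.Adj u v → p u = v ∨ p v = u := by
  classical
  -- Any vertex reachable from `v` and depending only on the component of `v` serves as the root.
  let r : V → V := fun v => (G.connectedComponentMk v).out
  have hr : ∀ v, G.Reachable v (r v) := fun v =>
    (SimpleGraph.ConnectedComponent.exact (Quot.out_eq (G.connectedComponentMk v))).symm
  choose P hP using fun v => (hr v).exists_isPath
  refine ⟨fun v => (P v).snd, fun u v huv => ?_⟩
  have hruv : r u = r v := by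
    simp only [r, SimpleGraph.ConnectedComponent.sound huv.reachable]
  by_cases hu : u ∈ (P v).support
  · exact Or.inr (hG.eq_snd_of_adj_start (hP v) huv.symm hu).symm
  · left
    have key : ∀ (a b : V) (q : G.Walk u a) (q' : G.Walk v b), q.IsPath → q'.IsPath →
        u ∉ q'.support → a = b → q.snd = v := by
      rintro a _ q q' hq hq' hn rfl
      have hc : (SimpleGraph.Walk.cons huv q').IsPath :=
        (SimpleGraph.Walk.cons_isPath_iff _ _).2 ⟨hq', hn⟩
      have := congrArg Subtype.val ((hG.subsingleton_path u a).elim ⟨q, hq⟩ ⟨_, hc⟩)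
      simp only at this
      rw [this, SimpleGraph.Walk.snd_cons]
    exact key _ _ _ _ (hP u) (hP v) hu hruv

open scoped Classical in
lemma forest_form_le {V : Type*} [Fintype V] {G : SimpleGraph V} (hG : G.IsAcyclic)
    {m : ℕ} (hm : 1 ≤ m) (hdeg : ∀ v, (G.neighborSet v).ncard ≤ m + 1) (x : V → ℝ) :
    ∑ i, ∑ j, (if G.Adj i j then x i * x j else 0) ≤ 2 * Real.sqrt m * ∑ i, x i ^ 2 := by
  obtain ⟨p, hp⟩ := exists_parent hG
  set s := Real.sqrt m with hs
  have hm' : (1 : ℝ) ≤ m := by exact_mod_cast hm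
  have hss : s * s = m := Real.mul_self_sqrt (by linarith)
  have hs1 : 1 ≤ s := Real.one_le_sqrt.2 hm'
  have hs0 : 0 < s := by linarith
  have hsi : s * s⁻¹ = 1 := mul_inv_cancel₀ hs0.ne'
  have hsi0 : 0 < s⁻¹ := inv_pos.2 hs0
  have hsi1 : s⁻¹ ≤ s := (inv_le_one_of_one_le₀ hs1).trans hs1
  -- `w i j` is the weight that the edge `ij` gives to `x i ^ 2`.
  let w : V → V → ℝ := fun i j => if p i = j then s else s⁻¹
  let T : V → V → ℝ := fun i j => if G.Adj i j then w i j * x i ^ 2 else 0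
  have hedge : ∀ i j, G.Adj i j → 2 * (x i * x j) ≤ w i j * x i ^ 2 + w j i * x j ^ 2 := by
    have base : ∀ a b : ℝ, 2 * (a * b) ≤ s * a ^ 2 + s⁻¹ * b ^ 2 := by
      intro a b
      have : s * a ^ 2 + s⁻¹ * b ^ 2 - 2 * (a * b) = s⁻¹ * (s * a - b) ^ 2 := by
        linear_combination (2 * a * b - s * a ^ 2) * hsi
      nlinarith [mul_nonneg hsi0.le (sq_nonneg (s * a - b))]
    have hw : ∀ i j, s⁻¹ ≤ w i j := by
      intro i j
      simp only [w]
      split_ifs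
      exacts [hsi1, le_rfl]
    intro i j hij
    rcases hp i j hij with h | h
    · have e : w i j = s := if_pos h
      rw [e]
      nlinarith [base (x i) (x j), mul_le_mul_of_nonneg_right (hw j i) (sq_nonneg (x j))]
    · have e : w j i = s := if_pos h
      rw [e]
      nlinarith [base (x j) (x i), mul_le_mul_of_nonneg_right (hw i j) (sq_nonneg (x i))]
  have hrow : ∀ i, ∑ j, T i j ≤ 2 * s * x i ^ 2 := by
    intro i
    have hcard : ((G.neighborFinset i).card : ℝ) ≤ m + 1 := by
      have := hdeg i
      rw [← SimpleGraph.coe_neighborFinset, Set.ncard_coe_finset] at this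
      exact_mod_cast this
    have e : ∑ j, T i j = (∑ j ∈ G.neighborFinset i, w i j) * x i ^ 2 := by
      rw [Finset.sum_mul, SimpleGraph.neighborFinset_eq_filter, Finset.sum_filter]
    rw [e]
    refine mul_le_mul_of_nonneg_right ?_ (sq_nonneg _)
    have hw : ∀ j, w i j = s⁻¹ + if p i = j then s - s⁻¹ else 0 := by
      intro j
      simp only [w]
      split_ifs <;> ring
    simp only [hw]
    rw [Finset.sum_add_distrib, Finset.sum_const, nsmul_eq_mul, Finset.sum_ite_eq]
    have h1 : ((G.neighborFinset i).card : ℝ) * s⁻¹ ≤ s + s⁻¹ := by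
      calc _ ≤ ((m : ℝ) + 1) * s⁻¹ := mul_le_mul_of_nonneg_right hcard hsi0.le
        _ = s + s⁻¹ := by rw [← hss]; linear_combination s * hsi
    split_ifs <;> linarith
  have hswap : ∑ i, ∑ j, T j i = ∑ i, ∑ j, T i j := Finset.sum_comm
  have h2 : 2 * ∑ i, ∑ j, (if G.Adj i j then x i * x j else 0)
      ≤ ∑ i, ∑ j, T i j + ∑ i, ∑ j, T j i := by
    simp only [Finset.mul_sum, ← Finset.sum_add_distrib]
    refine Finset.sum_le_sum fun i _ => Finset.sum_le_sum fun j _ => ?_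
    by_cases hij : G.Adj i j
    · simpa [T, hij, hij.symm] using hedge i j hij
    · simp [T, hij, G.adj_comm j i]
  have h3 : ∑ i, ∑ j, T i j ≤ 2 * s * ∑ i, x i ^ 2 := by
    rw [Finset.mul_sum]
    exact Finset.sum_le_sum fun i _ => hrow i
  linarith

/-- let `G` be a finite simple graph, `S` a nonempty subset of its vertices
and `m ≥ 1`.  If the spanning subgraph `G₁` of `G` whose edges are exactly the edges of
`G` not having both endpoints in `S` is a forest in which every vertex has degree at
most `m + 1`, then `λ_max(G) ≤ λ_max(G[S]) + 2√m`, where `G[S]` is the induced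
subgraph of `G` on `S`. -/
theorem lamMax_le_induced_add {V : Type*} [Fintype V] [DecidableEq V]
    (G : SimpleGraph V) (S : Finset V) (hS : S.Nonempty) (m : ℕ) (hm : 1 ≤ m)
    (G₁ : SimpleGraph V)
    (hG₁ : ∀ u v : V, G₁.Adj u v ↔ (G.Adj u v ∧ ¬(u ∈ S ∧ v ∈ S)))
    (hforest : G₁.IsAcyclic)
    (hdeg : ∀ v : V, (G₁.neighborSet v).ncard ≤ m + 1) :
    graphLamMax G ≤ graphLamMax (G.induce (↑S : Set V)) + 2 * Real.sqrt m := by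
  classical
  have : Nonempty (↑S : Set V) := hS.to_subtype
  have hL := graphLamMax_nonneg (G.induce (↑S : Set V))
  refine graphLamMax_le G (by positivity) fun x => ?_
  have h1 := forest_form_le hforest hm hdeg x
  have h2 : ∑ i : (↑S : Set V), ∑ j : (↑S : Set V),
      (if (G.induce (↑S : Set V)).Adj i j then x i * x j else 0)
      ≤ graphLamMax (G.induce (↑S : Set V)) * ∑ i : (↑S : Set V), x i ^ 2 := by
    convert form_le_graphLamMax (G.induce (↑S : Set V)) fun i => x i
  have hsum : ∀ f : V → ℝ, ∑ i : (↑S : Set V), f i = ∑ i, if i ∈ S then f i else 0 := by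
    intro f
    rw [← Finset.sum_filter, Finset.filter_mem_eq_inter, Finset.univ_inter]
    exact Finset.sum_coe_sort S f
  have hsq : ∑ i : (↑S : Set V), x i ^ 2 ≤ ∑ i, x i ^ 2 := by
    rw [hsum fun i => x i ^ 2]
    refine Finset.sum_le_sum fun i _ => ?_
    split_ifs
    exacts [le_rfl, sq_nonneg _]
  have hsplit : ∑ i, ∑ j, (if G.Adj i j then x i * x j else 0)
      = (∑ i, ∑ j, if G₁.Adj i j then x i * x j else 0)
        + ∑ i : (↑S : Set V), ∑ j : (↑S : Set V),
            if (G.induce (↑S : Set V)).Adj i j then x i * x j else 0 := by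
    have e : ∀ i : V, (∑ j : (↑S : Set V), if G.Adj i j then x i * x j else 0)
        = ∑ j, if j ∈ S then (if G.Adj i j then x i * x j else 0) else 0 :=
      fun i => hsum fun j => if G.Adj i j then x i * x j else 0
    simp only [SimpleGraph.comap_adj, Function.Embedding.subtype_apply, e]
    rw [hsum fun i => ∑ j, if j ∈ S then (if G.Adj i j then x i * x j else 0) else 0,
      ← Finset.sum_add_distrib]
    refine Finset.sum_congr rfl fun i _ => ?_
    by_cases hi : i ∈ S
    · rw [if_pos hi, ← Finset.sum_add_distrib]
      refine Finset.sum_congr rfl fun j _ => ?_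
      by_cases hj : j ∈ S <;> simp [hG₁, hi, hj]
    · simp [hG₁, hi]
  have h3 := mul_le_mul_of_nonneg_left hsq hL
  rw [hsplit, add_mul]
  linarith
end

section
/- Let V be a nonempty finite index set, A a real symmetric matrix indexed by V, and S ⊆ V. Let Π be the diagonal projection matrix with (Π)_{vv} = 1 for v ∈ S and 0 otherwise, and set A₀ = ΠAΠ and A₁ = A − A₀. Let ψ be a unit eigenvector of A with eigenvalue λ_max(A) (the largest eigenvalue of A), and set p = ‖Πψ‖². Then λ_max(A) ≤ p·‖A₀‖ + (2√(p(1−p)) + (1−p))·‖A₁‖, where ‖·‖ denotes the operator norm. -/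
/-!
Write `ψ = u + w` with `u = Πψ` supported on `S` and `w = ψ - Πψ` supported off `S`, so that
`‖u‖² = p` and `‖w‖² = 1 - p`. Since `ψ` is a unit eigenvector, `λ_max(A) = ⟨ψ, A₀ψ⟩ + ⟨ψ, A₁ψ⟩`.
As `A₀ = ΠA₀Π`, the first term is `⟨u, A₀u⟩ ≤ p‖A₀‖`. As `ΠA₁Π = 0`, the `⟨u, A₁u⟩` part of the
second term vanishes, and the two cross terms and `⟨w, A₁w⟩` are bounded by Cauchy–Schwarz
(`dotProduct_mulVec_le_opNorm`).
-/

/-- The largest eigenvalue of a real symmetric matrix, as the supremum of its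
spectrum. -/
noncomputable def lamMax {n : Type*} [Fintype n] [DecidableEq n]
    (A : Matrix n n ℝ) : ℝ :=
  sSup (spectrum ℝ A)

/-- The ℓ² → ℓ² operator norm of a real matrix. -/
noncomputable def opNorm {n : Type*} [Fintype n] [DecidableEq n]
    (A : Matrix n n ℝ) : ℝ :=
  ‖Matrix.toEuclideanCLM (𝕜 := ℝ) A‖

open Matrix in
/-- Cauchy–Schwarz for the bilinear form of a matrix, in coordinates. -/
lemma dotProduct_mulVec_le_opNorm {n : Type*} [Fintype n] [DecidableEq n]
    (M : Matrix n n ℝ) (x y : n → ℝ) :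
    x ⬝ᵥ (M *ᵥ y) ≤ opNorm M * (√(∑ v, x v ^ 2) * √(∑ v, y v ^ 2)) := by
  have h1 := real_inner_le_norm (WithLp.toLp 2 x)
    (Matrix.toEuclideanCLM (𝕜 := ℝ) M (WithLp.toLp 2 y))
  have h2 := (Matrix.toEuclideanCLM (𝕜 := ℝ) M).le_opNorm (WithLp.toLp 2 y)
  have hx : ‖WithLp.toLp 2 x‖ = √(∑ v, x v ^ 2) := by simp [EuclideanSpace.norm_eq]
  have hy : ‖WithLp.toLp 2 y‖ = √(∑ v, y v ^ 2) := by simp [EuclideanSpace.norm_eq]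
  have hi : inner ℝ (WithLp.toLp 2 x) (Matrix.toEuclideanCLM (𝕜 := ℝ) M (WithLp.toLp 2 y))
      = x ⬝ᵥ (M *ᵥ y) := by
    rw [Matrix.toEuclideanCLM_toLp, EuclideanSpace.inner_toLp_toLp, star_trivial, dotProduct_comm]
  rw [hi, hx] at h1
  rw [hy] at h2
  calc _ ≤ _ := h1
    _ ≤ √(∑ v, x v ^ 2) * (opNorm M * √(∑ v, y v ^ 2)) := by
      gcongr
      exact h2
    _ = _ := by ring

/-- let `A` be a real symmetric matrix indexed by a nonempty finite set
`V`, `S ⊆ V`, `Π` the diagonal projection onto `S`, `A₀ = ΠAΠ`, `A₁ = A − A₀`.  If `ψ`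
is a unit eigenvector of `A` with eigenvalue `λ_max(A)` and `p = ‖Πψ‖²`, then
`λ_max(A) ≤ p·‖A₀‖ + (2√(p(1−p)) + (1−p))·‖A₁‖`. -/
theorem lamMax_le_split {V : Type*} [Fintype V] [DecidableEq V] [Nonempty V]
    (A : Matrix V V ℝ) (hA : A.IsHermitian) (S : Finset V)
    (Pi : Matrix V V ℝ)
    (hPi : Pi = Matrix.diagonal (fun v => if v ∈ S then (1 : ℝ) else 0))
    (A₀ A₁ : Matrix V V ℝ) (hA₀ : A₀ = Pi * A * Pi) (hA₁ : A₁ = A - A₀)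
    (ψ : V → ℝ) (hunit : ∑ v, ψ v ^ 2 = 1)
    (heig : A.mulVec ψ = lamMax A • ψ)
    (p : ℝ) (hp : p = ∑ v, (Pi.mulVec ψ v) ^ 2) :
    lamMax A ≤ p * opNorm A₀ + (2 * Real.sqrt (p * (1 - p)) + (1 - p)) * opNorm A₁ := by
  have hPP : Pi * Pi = Pi := by
    subst hPi
    rw [Matrix.diagonal_mul_diagonal]
    simp
  have hPT : Pi.transpose = Pi := by simp [hPi]
  have hz : Pi * A₁ * Pi = 0 := by
    have h : Pi * (Pi * A * Pi) * Pi = (Pi * Pi) * A * (Pi * Pi) := by simp only [Matrix.mul_assoc]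
    rw [hA₁, hA₀, Matrix.mul_sub, Matrix.sub_mul, h, hPP, sub_self]
  have hA₀' : Pi * A₀ * Pi = A₀ := by
    have h : Pi * (Pi * A * Pi) * Pi = (Pi * Pi) * A * (Pi * Pi) := by simp only [Matrix.mul_assoc]
    rw [hA₀, h, hPP]
  obtain ⟨u, hu⟩ : ∃ u, u = Pi.mulVec ψ := ⟨_, rfl⟩
  obtain ⟨w, hw⟩ : ∃ w, w = ψ - u := ⟨_, rfl⟩
  have hcomp : ∀ M : Matrix V V ℝ, u ⬝ᵥ M.mulVec u = ψ ⬝ᵥ (Pi * M * Pi).mulVec ψ := by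
    intro M
    rw [hu, ← Matrix.mulVec_mulVec, ← Matrix.mulVec_mulVec, Matrix.dotProduct_mulVec ψ Pi,
      ← Matrix.mulVec_transpose, hPT]
  have hup : ∑ v, u v ^ 2 = p := by rw [hp, hu]
  have hwp : ∑ v, w v ^ 2 = 1 - p := by
    rw [← hunit, ← hup, ← Finset.sum_sub_distrib]
    refine Finset.sum_congr rfl fun v _ => ?_
    rw [hw, _root_.Pi.sub_apply, hu, hPi, Matrix.mulVec_diagonal]
    split_ifs <;> ring
  have hp0 : 0 ≤ p := hup ▸ Finset.sum_nonneg fun v _ => sq_nonneg _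
  have hq0 : 0 ≤ 1 - p := hwp ▸ Finset.sum_nonneg fun v _ => sq_nonneg _
  have hlam : lamMax A = ψ ⬝ᵥ A₀.mulVec ψ + ψ ⬝ᵥ A₁.mulVec ψ := by
    have h1 : ψ ⬝ᵥ ψ = 1 := by simpa [dotProduct, sq] using hunit
    have hA' : A = A₀ + A₁ := by rw [hA₁]; abel
    rw [← dotProduct_add, ← Matrix.add_mulVec, ← hA', heig, dotProduct_smul, h1]
    simp
  have hψ : ψ = u + w := by rw [hw]; abel
  have h0 : ψ ⬝ᵥ A₀.mulVec ψ = u ⬝ᵥ A₀.mulVec u := by rw [hcomp, hA₀']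
  have huu : u ⬝ᵥ A₁.mulVec u = 0 := by rw [hcomp, hz]; simp
  have h1 : ψ ⬝ᵥ A₁.mulVec ψ = u ⬝ᵥ A₁.mulVec w + w ⬝ᵥ A₁.mulVec u + w ⬝ᵥ A₁.mulVec w := by
    rw [hψ, Matrix.mulVec_add, add_dotProduct, dotProduct_add, dotProduct_add, huu]
    ring
  have b0 := dotProduct_mulVec_le_opNorm A₀ u u
  have b1 := dotProduct_mulVec_le_opNorm A₁ u w
  have b2 := dotProduct_mulVec_le_opNorm A₁ w u
  have b3 := dotProduct_mulVec_le_opNorm A₁ w w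
  rw [hup, Real.mul_self_sqrt hp0] at b0
  rw [hup, hwp] at b1 b2
  rw [hwp, Real.mul_self_sqrt hq0] at b3
  rw [hlam, h0, h1, Real.sqrt_mul hp0]
  linarith
end

section
/- Let V be a nonempty finite index set, A a real symmetric matrix indexed by V, and S ⊆ V. Let Π be the diagonal projection matrix with (Π)_{vv} = 1 for v ∈ S and 0 otherwise, and set A₀ = ΠAΠ and A₁ = A − A₀. Suppose for some real n > 0 that λ_max(A) ≥ n, ‖A₀‖ ≤ n, and ‖A₁‖ ≤ n/2. Then every unit eigenvector ψ of A with eigenvalue λ_max(A) satisfies ‖Πψ‖² ≥ 1/5. -/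
theorem sum_sq_mulVec_le {V : Type*} [Fintype V] [DecidableEq V]
    (M : Matrix V V ℝ) (x : V → ℝ) :
    ∑ v, (M.mulVec x v) ^ 2 ≤ opNorm M ^ 2 * ∑ v, x v ^ 2 := by
  have h := (Matrix.toEuclideanCLM (𝕜 := ℝ) M).le_opNorm (WithLp.toLp 2 x)
  have h2 := pow_le_pow_left₀ (norm_nonneg _) h 2
  rw [mul_pow, EuclideanSpace.norm_sq_eq, EuclideanSpace.norm_sq_eq] at h2
  simpa [opNorm, sq_abs] using h2

/-- let `A` be a real symmetric matrix indexed by a nonempty finite set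
`V`, `S ⊆ V`, `Π` the diagonal projection onto `S`, `A₀ = ΠAΠ`, `A₁ = A − A₀`.
If for some real `n > 0` we have `λ_max(A) ≥ n`, `‖A₀‖ ≤ n` and `‖A₁‖ ≤ n/2`, then
every unit eigenvector `ψ` of `A` with eigenvalue `λ_max(A)` satisfies
`‖Πψ‖² ≥ 1/5`. -/
theorem ground_state_weight {V : Type*} [Fintype V] [DecidableEq V] [Nonempty V]
    (A : Matrix V V ℝ) (hA : A.IsHermitian) (S : Finset V)
    (Pi : Matrix V V ℝ)
    (hPi : Pi = Matrix.diagonal (fun v => if v ∈ S then (1 : ℝ) else 0))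
    (A₀ A₁ : Matrix V V ℝ) (hA₀ : A₀ = Pi * A * Pi) (hA₁ : A₁ = A - A₀)
    (n : ℝ) (hn : 0 < n) (hlam : n ≤ lamMax A)
    (hA₀n : opNorm A₀ ≤ n) (hA₁n : opNorm A₁ ≤ n / 2) :
    ∀ ψ : V → ℝ, (∑ v, ψ v ^ 2 = 1) → A.mulVec ψ = lamMax A • ψ →
      1 / 5 ≤ ∑ v, (Pi.mulVec ψ v) ^ 2 := by
  intro ψ hψ heig
  have hbound : ∑ v, (A₁.mulVec ψ v) ^ 2 ≤ n ^ 2 / 4 := by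
    have h := sum_sq_mulVec_le A₁ ψ
    have h0 : 0 ≤ opNorm A₁ := norm_nonneg _
    rw [hψ] at h
    nlinarith
  have hoff : ∀ v, v ∉ S → A₁.mulVec ψ v = lamMax A * ψ v := by
    intro v hv
    rw [hA₁, Matrix.sub_mulVec, heig, hA₀, hPi, Matrix.mul_assoc, ← Matrix.mulVec_mulVec,
      _root_.Pi.sub_apply, Matrix.mulVec_diagonal, if_neg hv]
    simp
  have hPiv : ∀ v, Pi.mulVec ψ v = if v ∈ S then ψ v else 0 := by
    intro v
    rw [hPi, Matrix.mulVec_diagonal]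
    simp
  have hpt : ∀ v, n ^ 2 * (ψ v ^ 2 - (Pi.mulVec ψ v) ^ 2) ≤ (A₁.mulVec ψ v) ^ 2 := by
    intro v
    by_cases hv : v ∈ S
    · simp [hPiv, hv, sq_nonneg]
    · have hsq : n ^ 2 ≤ lamMax A ^ 2 := pow_le_pow_left₀ hn.le hlam 2
      rw [hoff v hv, hPiv, if_neg hv]
      nlinarith [mul_le_mul_of_nonneg_right hsq (sq_nonneg (ψ v))]
  have hsum := Finset.sum_le_sum (fun v (_ : v ∈ Finset.univ) => hpt v)
  rw [← Finset.mul_sum, Finset.sum_sub_distrib, hψ] at hsum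
  have hn2 : 0 < n ^ 2 := by positivity
  nlinarith
end

section
/- Let V and X be nonempty finite sets, let H be a real symmetric matrix indexed by V with H[i,j] ≤ 0 for all i ≠ j, and for each ordered pair (i,j) ∈ V×V let π_{i,j} be a permutation of X such that π_{j,i} = (π_{i,j})⁻¹ and π_{i,i} is the identity. Define the cover H' indexed by V×X by H'[(i,x),(j,y)] = H[i,j] if y = π_{i,j}(x) and 0 otherwise. Then the smallest eigenvalue of H' equals the smallest eigenvalue of H. -/
/-!
Write `m` for the smallest eigenvalue of `H`. An eigenvector `v` of `H` lifts to the eigenvector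
`(i, x) ↦ v i` of `H'`, so every eigenvalue of `H` is one of `H'`. Conversely, given an
eigenvector `w` of `H'` with eigenvalue `μ`, let `v i` be the Euclidean norm of `w` on the fibre
over `i`. Then `v ⬝ v = w ⬝ w`, and Cauchy–Schwarz on pairs of fibres, together with the sign of
the off-diagonal entries and `σ i i = 1`, gives `v ⬝ H v ≤ w ⬝ H' w = μ (w ⬝ w)`. Since
`m (v ⬝ v) ≤ v ⬝ H v`, it follows that `m ≤ μ`.
-/

open Matrix in
theorem mem_spectrum_iff_exists_mulVec {n : Type*} [Fintype n] [DecidableEq n]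
    (A : Matrix n n ℝ) (μ : ℝ) :
    μ ∈ spectrum ℝ A ↔ ∃ v : n → ℝ, v ≠ 0 ∧ A *ᵥ v = μ • v := by
  rw [spectrum.mem_iff, Matrix.isUnit_iff_isUnit_det, isUnit_iff_ne_zero, not_not,
    ← Matrix.exists_mulVec_eq_zero_iff]
  refine exists_congr fun v => and_congr_right fun _ => ?_
  rw [Matrix.sub_mulVec, sub_eq_zero, Algebra.algebraMap_eq_smul_one, Matrix.smul_mulVec,
    Matrix.one_mulVec, eq_comm]

open Matrix in
/-- Rayleigh bound: `A - m` is positive semidefinite when `m` is a lower bound of the spectrum. -/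
theorem mul_dotProduct_le_of_le_spectrum {n : Type*} [Fintype n] [DecidableEq n]
    {A : Matrix n n ℝ} (hA : A.IsHermitian) {m : ℝ} (hm : ∀ μ ∈ spectrum ℝ A, m ≤ μ)
    (v : n → ℝ) : m * (v ⬝ᵥ v) ≤ v ⬝ᵥ A *ᵥ v := by
  have hB : (A - m • (1 : Matrix n n ℝ)).PosSemidef := by
    have hherm : (A - m • (1 : Matrix n n ℝ)).IsHermitian := by
      refine hA.sub ?_
      simp [Matrix.IsHermitian]
    refine hherm.posSemidef_iff_eigenvalues_nonneg.2 fun i => ?_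
    obtain ⟨u, hu, h⟩ := (mem_spectrum_iff_exists_mulVec _ _).1
      (hherm.eigenvalues_mem_spectrum_real i)
    rw [Matrix.sub_mulVec, Matrix.smul_mulVec, Matrix.one_mulVec, sub_eq_iff_eq_add,
      ← add_smul] at h
    have := hm _ ((mem_spectrum_iff_exists_mulVec _ _).2 ⟨u, hu, h⟩)
    simpa using this
  have h := hB.dotProduct_mulVec_nonneg v
  rw [Matrix.sub_mulVec, Matrix.smul_mulVec, Matrix.one_mulVec, dotProduct_sub,
    dotProduct_smul] at h
  simpa using h

open Matrix in
theorem cover_mulVec {V X : Type*} [Fintype V] [Fintype X] [DecidableEq X]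
    {H : Matrix V V ℝ} {σ : V → V → Equiv.Perm X} {H' : Matrix (V × X) (V × X) ℝ}
    (hH' : ∀ p q : V × X, H' p q = if q.2 = σ p.1 q.1 p.2 then H p.1 q.1 else 0)
    (w : V × X → ℝ) (i : V) (x : X) :
    (H' *ᵥ w) (i, x) = ∑ j, H i j * w (j, σ i j x) := by
  simp [Matrix.mulVec, dotProduct, Fintype.sum_prod_type, hH']

open Matrix in
/-- Replacing a vector on the cover by its fibrewise Euclidean norms does not increase the
quadratic form. -/
theorem dotProduct_fibreNorm_le {V X : Type*} [Fintype V] [Fintype X] [DecidableEq X]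
    {H : Matrix V V ℝ} (hsign : ∀ i j : V, i ≠ j → H i j ≤ 0)
    {σ : V → V → Equiv.Perm X} (hid : ∀ i, σ i i = 1) {H' : Matrix (V × X) (V × X) ℝ}
    (hH' : ∀ p q : V × X, H' p q = if q.2 = σ p.1 q.1 p.2 then H p.1 q.1 else 0)
    (w : V × X → ℝ) :
    (fun i => √(∑ x, w (i, x) ^ 2)) ⬝ᵥ H *ᵥ (fun i => √(∑ x, w (i, x) ^ 2))
      ≤ w ⬝ᵥ H' *ᵥ w := by
  have hR : w ⬝ᵥ H' *ᵥ w = ∑ i, ∑ j, H i j * ∑ x, w (i, x) * w (j, σ i j x) := by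
    simp only [dotProduct, Fintype.sum_prod_type, cover_mulVec hH', Finset.mul_sum]
    refine Finset.sum_congr rfl fun i _ => ?_
    rw [Finset.sum_comm]
    exact Finset.sum_congr rfl fun j _ => Finset.sum_congr rfl fun x _ => by ring
  rw [hR]
  simp only [dotProduct, Matrix.mulVec, Finset.mul_sum (s := (Finset.univ : Finset V))]
  refine Finset.sum_le_sum fun i _ => Finset.sum_le_sum fun j _ => ?_
  rw [mul_left_comm]
  rcases eq_or_ne i j with rfl | hij
  · rw [Real.mul_self_sqrt (Finset.sum_nonneg fun _ _ => sq_nonneg _)]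
    simp [hid, sq]
  · refine mul_le_mul_of_nonpos_left ?_ (hsign i j hij)
    have h := Real.sum_mul_le_sqrt_mul_sqrt Finset.univ (fun x => w (i, x))
      (fun x => w (j, σ i j x))
    rwa [Equiv.sum_comp (σ i j) (fun y => w (j, y) ^ 2)] at h


/-- let `V`, `X` be nonempty finite sets, `H` a real symmetric matrix
indexed by `V` with nonpositive off-diagonal entries, and for each ordered pair
`(i,j)` let `σ i j` be a permutation of `X` with `σ j i = (σ i j)⁻¹` and `σ i i = 1`.
Define the cover `H'` indexed by `V × X` by `H'[(i,x),(j,y)] = H[i,j]` if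
`y = σ i j x` and `0` otherwise.  Then the smallest eigenvalue of `H'` equals the
smallest eigenvalue of `H`. -/
theorem cover_min_eigenvalue {V X : Type*} [Fintype V] [Fintype X]
    [DecidableEq V] [DecidableEq X] [Nonempty V] [Nonempty X]
    (H : Matrix V V ℝ) (hH : H.IsHermitian)
    (hsign : ∀ i j : V, i ≠ j → H i j ≤ 0)
    (σ : V → V → Equiv.Perm X)
    (hinv : ∀ i j, σ j i = (σ i j)⁻¹) (hid : ∀ i, σ i i = 1)
    (H' : Matrix (V × X) (V × X) ℝ)
    (hH' : ∀ p q : V × X, H' p q = if q.2 = σ p.1 q.1 p.2 then H p.1 q.1 else 0) :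
    sInf (spectrum ℝ H') = sInf (spectrum ℝ H) := by

  have hlift : spectrum ℝ H ⊆ spectrum ℝ H' := by
    intro μ hμ
    obtain ⟨v, hv, h⟩ := (mem_spectrum_iff_exists_mulVec _ _).1 hμ
    refine (mem_spectrum_iff_exists_mulVec _ _).2 ⟨fun p => v p.1, ?_, ?_⟩
    · obtain ⟨i, hi⟩ := Function.ne_iff.1 hv
      exact Function.ne_iff.2 ⟨(i, Classical.arbitrary X), hi⟩
    · ext ⟨i, x⟩
      rw [cover_mulVec hH']
      exact congrFun h i
  have hne : (spectrum ℝ H).Nonempty :=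
    ⟨_, hH.eigenvalues_mem_spectrum_real (Classical.arbitrary V)⟩
  have hbdd : BddBelow (spectrum ℝ H) := (Matrix.finite_real_spectrum (A := H)).bddBelow
  have hbdd' : BddBelow (spectrum ℝ H') := (Matrix.finite_real_spectrum (A := H')).bddBelow
  refine le_antisymm (csInf_le_csInf hbdd' hne hlift) (le_csInf (hne.mono hlift) fun μ hμ => ?_)
  obtain ⟨w, hw, h⟩ := (mem_spectrum_iff_exists_mulVec _ _).1 hμ
  have h1 := mul_dotProduct_le_of_le_spectrum hH (fun _ hμ => csInf_le hbdd hμ)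
    (fun i => √(∑ x, w (i, x) ^ 2))
  have h2 := dotProduct_fibreNorm_le hsign hid hH' w
  have h3 : dotProduct (fun i => √(∑ x, w (i, x) ^ 2)) (fun i => √(∑ x, w (i, x) ^ 2))
      = dotProduct w w := by
    simp only [dotProduct, Fintype.sum_prod_type]
    refine Finset.sum_congr rfl fun i _ => ?_
    rw [Real.mul_self_sqrt (Finset.sum_nonneg fun _ _ => sq_nonneg _)]
    simp only [sq]
  rw [h, dotProduct_smul, smul_eq_mul] at h2
  rw [h3] at h1
  have hpos : 0 < dotProduct w w :=
    lt_of_le_of_ne (Finset.sum_nonneg fun _ _ => mul_self_nonneg _)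
      fun h0 => hw (dotProduct_self_eq_zero.1 h0.symm)
  exact le_of_mul_le_mul_right (h1.trans h2) hpos
end
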